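/- Let A be an n×n quaternion matrix that possesses a group inverse X and a Moore–Penrose inverse Y. Then the matrix Z := Y·A·X satisfies Z·A = Y·A and R_l(Z) = R_l(A); that is, Z = A† A A^# is a left core inverse of A. -/

import Mathlib

/-! Two matrices that are left multiples of each other have the same left row space. Since `A`
commutes with `A^#`, the matrix `Z = A† A A^#` equals `(A† A^#) A`, while `A = A A A^#` and
`A = A A† A` give back `A = (A A) Z`. -/

theorem mul_self_mul_mul_mul_eq_self_of_commute {S : Type*} [Semigroup S] {a x y : S}
    (hx : a * x * a = a) (hax : Commute a x) (hy : a * y * a = a) :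
    a * a * (y * a * x) = a :=
  calc
    a * a * (y * a * x) = a * (a * y * a) * x := by simp only [mul_assoc]
    _ = a * a * x := by rw [hy]
    _ = a * x * a := hax.right_comm a
    _ = a := hx

section RowSpace

variable {l m m' n R : Type*} [Fintype l] [Fintype m] [Fintype m'] [NonUnitalSemiring R]

theorem range_vecMul_mul_subset (B : Matrix l m R) (A : Matrix m n R) :
    Set.range (Matrix.vecMul · (B * A)) ⊆ Set.range (Matrix.vecMul · A) := by
  rintro _ ⟨x, rfl⟩
  exact ⟨Matrix.vecMul x B, Matrix.vecMul_vecMul x B A⟩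

theorem range_vecMul_eq_of_mul_eq_of_mul_eq {A : Matrix m n R} {B : Matrix m' n R}
    {C : Matrix m' m R} {D : Matrix m m' R} (hC : C * A = B) (hD : D * B = A) :
    Set.range (Matrix.vecMul · B) = Set.range (Matrix.vecMul · A) := by
  apply Set.Subset.antisymm
  · simpa only [hC] using range_vecMul_mul_subset C A
  · simpa only [hD] using range_vecMul_mul_subset D B

end RowSpace

theorem left_core_inverse_of_group_and_mp_general {n R : Type*} [Fintype n] [NonUnitalSemiring R]
    {A X Y : Matrix n n R} (hX : A * X * A = A) (hAX : Commute A X) (hY : A * Y * A = A) :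
    Y * A * X * A = Y * A ∧
      Set.range (Matrix.vecMul · (Y * A * X)) = Set.range (Matrix.vecMul · A) := by
  constructor
  · calc
      Y * A * X * A = Y * (A * X * A) := by simp only [mul_assoc]
      _ = Y * A := by rw [hX]
  · have left_multiple : Y * X * A = Y * A * X := (hAX.right_comm Y).symm
    have recovers : A * A * (Y * A * X) = A := mul_self_mul_mul_mul_eq_self_of_commute hX hAX hY
    exact range_vecMul_eq_of_mul_eq_of_mul_eq left_multiple recovers

/-- The matrix `Z' = Y·A·X` is a left core inverse of the quaternion matrix `A`:
`Z'·A = Y·A` and the left row space of `Z'` equals that of `A`. -/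
theorem left_core_inverse_of_group_and_mp {n : ℕ}
    (A X Y : Matrix (Fin n) (Fin n) (Quaternion ℝ))
    (hX1 : A * X * A = A) (hX2 : X * A * X = X) (hX3 : A * X = X * A)
    (hY1 : A * Y * A = A) (hY2 : Y * A * Y = Y)
    (hY3 : (A * Y).conjTranspose = A * Y) (hY4 : (Y * A).conjTranspose = Y * A) :
    (Y * A * X) * A = Y * A ∧
    {y : Fin n → Quaternion ℝ | ∃ x, Matrix.vecMul x (Y * A * X) = y} =
      {y : Fin n → Quaternion ℝ | ∃ x, Matrix.vecMul x A = y} :=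
  left_core_inverse_of_group_and_mp_general hX1 hX3 hY1
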